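/- For the asymptotic density zero ideal 𝒵: non(ℰ) ≤ non*(𝒵), cov*(𝒵) ≤ cov(ℰ), and cov*(𝒵) ≤ non*(𝒵). -/

import Mathlib

open Cardinal Filter Set
open scoped ENNReal

noncomputable section

/-- An ideal on a (countable) set `X`, in the sense of the paper: a proper family of
subsets of `X` closed under taking subsets and finite unions and containing all
finite subsets of `X`. -/
structure IsIdealOn {X : Type} (I : Set (Set X)) : Prop where
  subset_mem : ∀ ⦃A B : Set X⦄, A ⊆ B → B ∈ I → A ∈ I
  union_mem : ∀ ⦃A B : Set X⦄, A ∈ I → B ∈ I → A ∪ B ∈ I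
  finite_mem : ∀ ⦃A : Set X⦄, A.Finite → A ∈ I
  proper : (univ : Set X) ∉ I

/-- The finite initial segment `x ↾ n` of `x : X^ω`, as a list (an element of `X^{<ω}`). -/
def seg {X : Type} (x : ℕ → X) (n : ℕ) : List X := (List.range n).map x

/-- The `I`-Miller null ideal `M_I`: the σ-ideal on `X^ω` generated by the sets
`M_φ = {x | ∀^∞ n, x n ∈ φ (x ↾ n)}`, where `φ : X^{<ω} → I`.  (A set is in the
generated σ-ideal iff it is covered by countably many generators.) -/
def MIdeal {X : Type} (I : Set (Set X)) : Set (Set (ℕ → X)) :=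
  {A | ∃ φ : ℕ → List X → Set X, (∀ n s, φ n s ∈ I) ∧
    A ⊆ ⋃ n, {x : ℕ → X | ∀ᶠ m in atTop, x m ∈ φ n (seg x m)}}

/-- The σ-ideal `K_I` on `X^ω` generated by the sets
`K_φ = {x | ∀^∞ n, x n ∈ φ n}`, where `φ : ω → I`. -/
def KIdeal {X : Type} (I : Set (Set X)) : Set (Set (ℕ → X)) :=
  {A | ∃ φ : ℕ → ℕ → Set X, (∀ n m, φ n m ∈ I) ∧
    A ⊆ ⋃ n, {x : ℕ → X | ∀ᶠ m in atTop, x m ∈ φ n m}}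

/-- Additivity `add(J)` of a (σ-)ideal `J`: the least cardinality of a subfamily of `J`
whose union is not in `J`. -/
def addIdeal {Y : Type} (J : Set (Set Y)) : Cardinal :=
  sInf {c | ∃ 𝒜 : Set (Set Y), 𝒜 ⊆ J ∧ ⋃₀ 𝒜 ∉ J ∧ Cardinal.mk 𝒜 = c}

/-- Covering number `cov(J)`: the least cardinality of a subfamily of `J` covering `Y`. -/
def covIdeal {Y : Type} (J : Set (Set Y)) : Cardinal :=
  sInf {c | ∃ 𝒜 : Set (Set Y), 𝒜 ⊆ J ∧ ⋃₀ 𝒜 = Set.univ ∧ Cardinal.mk 𝒜 = c}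

/-- Uniformity `non(J)`: the least cardinality of a subset of `Y` not in `J`. -/
def nonIdeal {Y : Type} (J : Set (Set Y)) : Cardinal :=
  sInf {c | ∃ S : Set Y, S ∉ J ∧ Cardinal.mk S = c}

/-- Cofinality `cof(J)`: the least cardinality of a cofinal (w.r.t. `⊆`) subfamily of `J`. -/
def cofIdeal {Y : Type} (J : Set (Set Y)) : Cardinal :=
  sInf {c | ∃ 𝒜 : Set (Set Y), 𝒜 ⊆ J ∧ (∀ B ∈ J, ∃ A ∈ 𝒜, B ⊆ A) ∧ Cardinal.mk 𝒜 = c}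

/-- `f ≤* g`: eventual domination on `ω^ω`. -/
def LeStar (f g : ℕ → ℕ) : Prop := ∀ᶠ n in atTop, f n ≤ g n

/-- The bounding number `𝔟`. -/
def bNum : Cardinal :=
  sInf {c | ∃ F : Set (ℕ → ℕ), (∀ g : ℕ → ℕ, ∃ f ∈ F, ¬ LeStar f g) ∧ Cardinal.mk F = c}

/-- The dominating number `𝔡`. -/
def dNum : Cardinal :=
  sInf {c | ∃ F : Set (ℕ → ℕ), (∀ f : ℕ → ℕ, ∃ g ∈ F, LeStar f g) ∧ Cardinal.mk F = c}

/-- `A ⊆* B`: almost inclusion (`A \ B` finite). -/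
def AlSub {X : Type} (A B : Set X) : Prop := (A \ B).Finite

/-- The set of cardinalities of witnessing families for `add*_ω(I)`: families `𝒜 ⊆ I`
such that for every countable `B̄ ⊆ I` some `A ∈ 𝒜` satisfies `A ⊄* B` for all `B ∈ B̄`.
`add*_ω(I)` is the minimum of this set (`∞` if it is empty). -/
def addStarOmegaFam {X : Type} (I : Set (Set X)) : Set Cardinal :=
  {c | ∃ 𝒜 : Set (Set X), 𝒜 ⊆ I ∧
    (∀ B : ℕ → Set X, (∀ n, B n ∈ I) → ∃ A ∈ 𝒜, ∀ n, ¬ AlSub A (B n)) ∧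
    Cardinal.mk 𝒜 = c}

/-- The set of cardinalities of witnessing families for `cof*_ω(I)`: families `𝒜` of
countable subsets of `I` such that for every countable `B̄ ⊆ I` there is `Ā ∈ 𝒜` with:
every `B ∈ B̄` satisfies `B ⊆* A` for some `A ∈ Ā`.  `cof*_ω(I)` is the minimum. -/
def cofStarOmegaFam {X : Type} (I : Set (Set X)) : Set Cardinal :=
  {c | ∃ 𝒜 : Set (Set (Set X)), (∀ As ∈ 𝒜, As.Countable ∧ As ⊆ I) ∧
    (∀ B : ℕ → Set X, (∀ n, B n ∈ I) → ∃ As ∈ 𝒜, ∀ n, ∃ A ∈ As, AlSub (B n) A) ∧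
    Cardinal.mk 𝒜 = c}

/-- The set of cardinalities of witnessing families for `non*_ω(I)`: families `𝒜` of
infinite subsets of `X` such that for every countable `B̄ ⊆ I` there is `A ∈ 𝒜` with
`A ∩ B` finite for all `B ∈ B̄`.  `non*_ω(I)` is the minimum of this set. -/
def nonStarOmegaFam {X : Type} (I : Set (Set X)) : Set Cardinal :=
  {c | ∃ 𝒜 : Set (Set X), (∀ A ∈ 𝒜, A.Infinite) ∧
    (∀ B : ℕ → Set X, (∀ n, B n ∈ I) → ∃ A ∈ 𝒜, ∀ n, (A ∩ B n).Finite) ∧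
    Cardinal.mk 𝒜 = c}

/-- The set of cardinalities of witnessing families for `cov*(I)`: families `𝒜 ⊆ I` such
that every infinite `B ⊆ X` has infinite intersection with some member of `𝒜`.
`cov*(I)` is the minimum of this set (`∞` if it is empty, i.e. if `I` is not tall). -/
def covStarFam {X : Type} (I : Set (Set X)) : Set Cardinal :=
  {c | ∃ 𝒜 : Set (Set X), 𝒜 ⊆ I ∧
    (∀ B : Set X, B.Infinite → ∃ A ∈ 𝒜, (A ∩ B).Infinite) ∧ Cardinal.mk 𝒜 = c}

/-- The set of cardinalities of witnessing families for `non*(I)`: families `𝒜` of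
infinite subsets of `X` such that every `B ∈ I` has finite intersection with some
member of `𝒜`.  `non*(I)` is the minimum of this set. -/
def nonStarFam {X : Type} (I : Set (Set X)) : Set Cardinal :=
  {c | ∃ 𝒜 : Set (Set X), (∀ A ∈ 𝒜, A.Infinite) ∧
    (∀ B ∈ I, ∃ A ∈ 𝒜, (A ∩ B).Finite) ∧ Cardinal.mk 𝒜 = c}

/-- The meager ideal of the product space `X^ω`, where `X` carries the discrete
topology (for countable `X` this is a Polish space). -/
def meagerIdeal (X : Type) : Set (Set (ℕ → X)) :=
  letI : TopologicalSpace X := ⊥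
  {A : Set (ℕ → X) | IsMeagre A}

/-- The Fubini product `I ⊗ J` of two ideals. -/
def Fubini {X Y : Type} (I : Set (Set X)) (J : Set (Set Y)) : Set (Set (X × Y)) :=
  {A | {x : X | {y : Y | (x, y) ∈ A} ∉ J} ∈ I}

/-- The ideal `Fin` of finite subsets of `X`. -/
def finIdeal (X : Type) : Set (Set X) := {A : Set X | A.Finite}

/-- The nowhere dense ideal on `2^{<ω}`: `A` belongs to it iff for every `s` there is an
extension `t ⊇ s` none of whose extensions belongs to `A`. -/
def nwdIdeal : Set (Set (List Bool)) :=
  {A | ∀ s : List Bool, ∃ t : List Bool, s <+: t ∧ ∀ u : List Bool, t <+: u → u ∉ A}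

/-- A submeasure: monotone, finitely subadditive, vanishing on `∅`. -/
def IsSubmeasure (φ : Set ℕ → ℝ≥0∞) : Prop :=
  φ ∅ = 0 ∧ (∀ A B : Set ℕ, A ⊆ B → φ A ≤ φ B) ∧ ∀ A B : Set ℕ, φ (A ∪ B) ≤ φ A + φ B

/-- `I` is gradually fragmented: there are a partition `⟨P n⟩` of `ω` into nonempty finite
sets and submeasures `φ n` with `A ∈ I ↔ sup_n φ n (A ∩ P n) < ∞`, together with
`f : ω → ω` such that for all `n, i`, for all but finitely many `j`: any family of at
most `i` subsets of `P j`, each of `φ j`-value `≤ n`, has union of `φ j`-value `≤ f n`. -/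
def GraduallyFragmented (I : Set (Set ℕ)) : Prop :=
  ∃ (P : ℕ → Set ℕ) (φ : ℕ → Set ℕ → ℝ≥0∞) (f : ℕ → ℕ),
    (∀ n, (P n).Finite) ∧ (∀ n, (P n).Nonempty) ∧
    (∀ n m, n ≠ m → Disjoint (P n) (P m)) ∧ (⋃ n, P n) = Set.univ ∧
    (∀ n, IsSubmeasure (φ n)) ∧
    (∀ A : Set ℕ, A ∈ I ↔ (⨆ n, φ n (A ∩ P n)) < ⊤) ∧
    (∀ n i : ℕ, ∀ᶠ j in atTop, ∀ ℬ : Finset (Set ℕ), ℬ.card ≤ i →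
      (∀ B ∈ ℬ, B ⊆ P j) → (∀ B ∈ ℬ, φ j B ≤ (n : ℝ≥0∞)) →
      φ j (⋃ B ∈ ℬ, B) ≤ ((f n : ℕ) : ℝ≥0∞))

/-- The basic clopen cylinder of `2^ω` determined by a finite binary string. -/
def cylSet (s : List Bool) : Set (ℕ → Bool) :=
  {x | ∀ i : Fin s.length, x i.val = s.get i}

/-- `A ⊆ 2^ω` is null for the uniform (coin-flipping) product measure: for every `ε > 0`
it is covered by countably many cylinders of total weight `≤ ε` (the cylinder of a
string `s` has weight `2^{-|s|}`). -/
def IsNullCantor (A : Set (ℕ → Bool)) : Prop :=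
  ∀ ε : ℝ≥0∞, 0 < ε → ∃ s : ℕ → List Bool,
    A ⊆ (⋃ n, cylSet (s n)) ∧ (∑' n : ℕ, (2⁻¹ : ℝ≥0∞) ^ (s n).length) ≤ ε

/-- Coordinatewise addition modulo 2 on `2^ω`. -/
def xorAdd (x y : ℕ → Bool) : ℕ → Bool := fun n => xor (x n) (y n)

/-- The transitive additivity `add_t(𝒩)` of the null ideal of `2^ω`:
`min {|A| : A ⊆ 2^ω ∧ ∃ X ∈ 𝒩, A + X ∉ 𝒩}`. -/
def addTNull : Cardinal :=
  sInf {c | ∃ A : Set (ℕ → Bool),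
    (∃ N : Set (ℕ → Bool), IsNullCantor N ∧ ¬ IsNullCantor (Set.image2 xorAdd A N)) ∧
    Cardinal.mk A = c}

/-- Kada's cardinal invariant `𝔩`: the least `κ` such that for every `g ∈ ω^ω` there is a
family `𝒮`, of size `κ`, of slaloms `S` with `S i ⊆ {0, …, g i}` and `|S i| ≤ i`, such
that every `f ≤* g` satisfies `f ∈* S` for some `S ∈ 𝒮`. -/
def lNum : Cardinal :=
  sInf {c : Cardinal | ∀ g : ℕ → ℕ, ∃ 𝒮 : Set (ℕ → Finset ℕ),
    (∀ S ∈ 𝒮, ∀ i : ℕ, S i ⊆ Finset.range (g i + 1) ∧ (S i).card ≤ i) ∧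
    (∀ f : ℕ → ℕ, LeStar f g → ∃ S ∈ 𝒮, ∀ᶠ i in atTop, f i ∈ S i) ∧
    Cardinal.mk 𝒮 = c}

/-- Membership in `C ⊆ 2^ω` only depends on the first `n` coordinates. -/
def DeterminedBy (C : Set (ℕ → Bool)) (n : ℕ) : Prop :=
  ∀ x y : ℕ → Bool, (∀ i < n, x i = y i) → (x ∈ C ↔ y ∈ C)

/-- Extension of a finite binary string by `false`s. -/
def extendFalse {n : ℕ} (s : Fin n → Bool) : ℕ → Bool :=
  fun i => if h : i < n then s ⟨i, h⟩ else false

/-- `C ⊆ 2^ω` has uniform product measure `1/2`: for some `n`, membership in `C` depends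
only on the first `n` coordinates and exactly half of the `2^n` cylinders of level `n`
are included in `C`. -/
def HalfMeasure (C : Set (ℕ → Bool)) : Prop :=
  ∃ n : ℕ, DeterminedBy C n ∧
    2 * Nat.card {s : Fin n → Bool // extendFalse s ∈ C} = 2 ^ n

/-- Clopenness in the Cantor space `2^ω` (`Bool` discrete, product topology). -/
def IsClopenCantor (C : Set (ℕ → Bool)) : Prop :=
  letI : TopologicalSpace Bool := ⊥
  IsClopen C

/-- Closedness in the Cantor space `2^ω`. -/
def IsClosedCantor (C : Set (ℕ → Bool)) : Prop :=
  letI : TopologicalSpace Bool := ⊥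
  IsClosed C

/-- `Ω`: the (countable) set of clopen subsets of `2^ω` of measure `1/2`. -/
abbrev SoleckiBase : Type := {C : Set (ℕ → Bool) // IsClopenCantor C ∧ HalfMeasure C}

/-- The Solecki ideal `𝒮` on `Ω`: the ideal generated by the sets
`I_y = {C ∈ Ω : y ∈ C}` for `y ∈ 2^ω`. -/
def SoleckiIdeal : Set (Set SoleckiBase) :=
  {A | ∃ F : Finset (ℕ → Bool), A ⊆ ⋃ y ∈ F, {C : SoleckiBase | y ∈ C.val}}

/-- `cov_ω(𝒩)`: the least cardinality of a family of Lebesgue-null sets of reals such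
that every countable set of reals is contained in one of them. -/
def covOmegaNull : Cardinal :=
  sInf {c | ∃ 𝒜 : Set (Set ℝ), (∀ N ∈ 𝒜, MeasureTheory.volume N = 0) ∧
    (∀ B : Set ℝ, B.Countable → ∃ N ∈ 𝒜, B ⊆ N) ∧ Cardinal.mk 𝒜 = c}

/-- `non(𝒩)`: the least cardinality of a non-null set of reals. -/
def nonNullReal : Cardinal :=
  sInf {c | ∃ S : Set ℝ, MeasureTheory.volume S ≠ 0 ∧ Cardinal.mk S = c}

/-- The eventually different ideal `ℰ𝒟` on `ω × ω`. -/
def EDIdeal : Set (Set (ℕ × ℕ)) :=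
  {A | ∃ k : ℕ, ∀ᶠ n in atTop,
    {m : ℕ | (n, m) ∈ A}.Finite ∧ {m : ℕ | (n, m) ∈ A}.ncard ≤ k}

/-- Characteristic function identifying `P(ω)` with `2^ω`. -/
def chiSet (A : Set ℕ) : ℕ → Bool :=
  fun n => @decide (n ∈ A) (Classical.propDecidable _)

/-- `I ⊆ P(ω)` is `F_σ`: under the identification `P(ω) ≅ 2^ω`, `I` is a countable
union of closed subsets of the Cantor space. -/
def IsFSigmaIdeal (I : Set (Set ℕ)) : Prop :=
  ∃ C : ℕ → Set (ℕ → Bool), (∀ n, IsClosedCantor (C n)) ∧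
    ∀ A : Set ℕ, A ∈ I ↔ chiSet A ∈ ⋃ n, C n

/-- The underlying countable set of `Fin^{⊗(n+1)}`: `FinPowType 0 = ω`,
`FinPowType (n+1) = ω × FinPowType n`. -/
def FinPowType : ℕ → Type
  | 0 => ℕ
  | n + 1 => ℕ × FinPowType n

/-- The iterated Fubini power of `Fin`: `FinPowIdeal 0 = Fin`, and
`FinPowIdeal (n+1) = Fin ⊗ FinPowIdeal n`; thus `Fin^{⊗k} = FinPowIdeal (k-1)`. -/
def FinPowIdeal : (n : ℕ) → Set (Set (FinPowType n))
  | 0 => finIdeal ℕ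
  | n + 1 => Fubini (finIdeal ℕ) (FinPowIdeal n)

/-- `π` `k`-constantly bounding-predicts `f`: for all but finitely many `i` there is
`j ∈ [i, i + k)` with `f j ≤ π (f ↾ j)`. -/
def ConstBddPred (k : ℕ) (π : List ℕ → ℕ) (f : ℕ → ℕ) : Prop :=
  ∀ᶠ i in atTop, ∃ j : ℕ, i ≤ j ∧ j < i + k ∧ f j ≤ π (seg f j)

/-- The constant bounding evasion number `𝔢^const_≤(k)`. -/
def eConstLe (k : ℕ) : Cardinal :=
  sInf {c | ∃ F : Set (ℕ → ℕ),
    (∀ π : List ℕ → ℕ, ∃ f ∈ F, ¬ ConstBddPred k π f) ∧ Cardinal.mk F = c}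

/-- The constant bounding prediction number `𝔳^const_≤(k)`. -/
def vConstLe (k : ℕ) : Cardinal :=
  sInf {c | ∃ Ps : Set (List ℕ → ℕ),
    (∀ f : ℕ → ℕ, ∃ π ∈ Ps, ConstBddPred k π f) ∧ Cardinal.mk Ps = c}

/-- The asymptotic density zero ideal `𝒵` on `ω`. -/
def densityZero : Set (Set ℕ) :=
  {A : Set ℕ | Tendsto (fun n : ℕ => ((A ∩ Iio n).ncard : ℝ) / (n : ℝ)) atTop (nhds (0 : ℝ))}

/-- The σ-ideal `ℰ` on `2^ω` generated by the closed null sets. -/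
def EIdeal : Set (Set (ℕ → Bool)) :=
  {A | ∃ C : ℕ → Set (ℕ → Bool),
    (∀ n, IsClosedCantor (C n) ∧ IsNullCantor (C n)) ∧ A ⊆ ⋃ n, C n}

/-!
Identify an integer with its sequence of binary digits. If `W n` is determined by the first `n`
coordinates and its measure tends to `0`, then `{N | N.testBit ∈ W (Nat.log 2 N)}` has density
zero, because among the integers of logarithm `n` its relative density is at most the measure of
`W n`.

*`non(ℰ) ≤ non*(𝒵)` and `cov*(𝒵) ≤ cov(ℰ)`.* An infinite set `A` of integers is coded by a pair
`(x, y)`: some members `a q` of `A` converge to `x`, agreeing with it below `q`, and by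
diagonalization infinitely many of them coincide with a single sequence `y` from `q` up to their
leading digit. Given `E ∈ ℰ`, there are closed null sets `F k`, invariant under changes of the
coordinates below `k`, such that each point of `E` lies in all but finitely many of them. Let
`k n → ∞` so slowly that the set `W n` of sequences agreeing below `n` with a member of `F (k n)`
has measure tending to `0`. If `x, y ∈ E`, then for `a q` of logarithm `n` either `k n ≤ q`, and
`a q` lies in `W (k n)` thanks to `x`; or `q < k n`, and `a q` lies in `W n` thanks to `y`, as
`F (k n)` does not see the digits below `q`. So one set in `𝒵` meets every `A` coded in `E` in an
infinite set.

*`cov*(𝒵) ≤ non*(𝒵)`.* It suffices that `cov*(𝒵) ≤ 𝔡` and `min {𝔡, cov(ℰ)} ≤ non*(𝒵)`. For the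
first, a bound `g` on the logarithms of the `a q` yields intervals `[v i, g (v i)]` that leave room
to guess a slowly growing initial segment of `x`. For the second, fewer than `𝔡` infinite sets `A`
admit one `k → ∞` so slow that, by Borel–Cantelli, the random set of integers whose lowest
`k (log N)` digits match random ones almost surely meets each `A` in an infinite set; the
exceptional random seeds form a set in `ℰ` for each `A`, and if every set in `𝒵` is almost disjoint
from some `A`, these exceptional sets cover `2^ω`.
-/

open MeasureTheory Topology

/-! ### The coin-tossing measure -/

/-- The uniform product measure on `2^ω`, i.e. the law of a sequence of fair coin tosses. -/
def coinMeasure : Measure (ℕ → Bool) :=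
  Measure.infinitePi fun _ => (PMF.uniformOfFintype Bool).toMeasure

instance : IsProbabilityMeasure coinMeasure := by
  unfold coinMeasure
  infer_instance

theorem coinMeasure_pi_singleton (s : Finset ℕ) (c : ℕ → Bool) :
    coinMeasure ((s : Set ℕ).pi fun i => {c i}) = 2⁻¹ ^ s.card := by
  rw [coinMeasure, Measure.infinitePi_pi _ fun i _ => measurableSet_singleton _]
  simp

theorem coinMeasure_cylinder (x : ℕ → Bool) (n : ℕ) :
    coinMeasure (PiNat.cylinder x n) = 2⁻¹ ^ n := by
  simpa [PiNat.cylinder_eq_pi] using coinMeasure_pi_singleton (Finset.range n) x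

instance : NullSingletonClass coinMeasure := by
  refine ⟨fun x => ?_⟩
  have hle (n : ℕ) : coinMeasure {x} ≤ 2⁻¹ ^ n := by
    rw [← coinMeasure_cylinder x n]
    exact measure_mono (singleton_subset_iff.2 (PiNat.self_mem_cylinder x n))
  have hzero : Tendsto (fun n => (2⁻¹ : ℝ≥0∞) ^ n) atTop (𝓝 0) :=
    ENNReal.tendsto_pow_atTop_nhds_zero_of_lt_one (by simp)
  exact le_antisymm (ge_of_tendsto' hzero hle) bot_le

theorem measurePreserving_xorAdd (y : ℕ → Bool) :
    MeasurePreserving (xorAdd y) coinMeasure coinMeasure := by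
  have hf (i : ℕ) : Measurable (xor (y i)) := measurable_of_countable _
  have hcoin (b : Bool) : ((PMF.uniformOfFintype Bool).toMeasure).map (xor b) =
      (PMF.uniformOfFintype Bool).toMeasure := by
    refine Measure.ext_of_singleton fun c => ?_
    have hpre : xor b ⁻¹' {c} = {xor b c} := by ext d; cases b <;> cases c <;> cases d <;> simp
    rw [Measure.map_apply (measurable_of_countable _) (measurableSet_singleton c), hpre]
    simp
  refine ⟨measurable_pi_lambda _ fun i => (hf i).comp (measurable_pi_apply i), ?_⟩
  exact (Measure.infinitePi_map_pi _ hf).trans (congrArg _ (funext fun i => hcoin (y i)))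

theorem iIndepSet_pi_singleton {s : ℕ → Finset ℕ} (hs : Pairwise (Function.onFun Disjoint s))
    (c : ℕ → Bool) :
    ProbabilityTheory.iIndepSet (fun n => (s n : Set ℕ).pi fun i => {c i}) coinMeasure := by
  have hmeas (n : ℕ) : MeasurableSet ((s n : Set ℕ).pi fun i => {c i}) :=
    .pi (s n).countable_toSet fun i _ => measurableSet_singleton _
  rw [ProbabilityTheory.iIndepSet_iff_meas_biInter hmeas]
  intro t
  have hinter : ⋂ n ∈ t, (s n : Set ℕ).pi (fun i => {c i}) =
      ((t.biUnion s : Finset ℕ) : Set ℕ).pi fun i => {c i} := by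
    ext; simp [Set.mem_pi]; grind
  rw [hinter, coinMeasure_pi_singleton, Finset.card_biUnion fun i _ j _ hij => hs hij]
  simp only [coinMeasure_pi_singleton, Finset.prod_pow_eq_pow_sum]

theorem cylSet_seg (x : ℕ → Bool) (n : ℕ) : cylSet (seg x n) = PiNat.cylinder x n := by
  ext y
  simp [cylSet, seg, PiNat.mem_cylinder_iff, Fin.forall_iff]

theorem exists_cylSet_eq_cylinder (s : List Bool) :
    ∃ x, cylSet s = PiNat.cylinder x s.length := by
  have hs : seg (fun i => s.getD i false) s.length = s := by
    apply List.ext_getElem <;> simp +contextual [seg]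
  exact ⟨_, by rw [← cylSet_seg, hs]⟩

theorem coinMeasure_cylSet (s : List Bool) : coinMeasure (cylSet s) = 2⁻¹ ^ s.length := by
  obtain ⟨x, hx⟩ := exists_cylSet_eq_cylinder s
  rw [hx, coinMeasure_cylinder]

theorem measurableSet_cylinder (x : ℕ → Bool) (n : ℕ) : MeasurableSet (PiNat.cylinder x n) :=
  (PiNat.isOpen_cylinder _ x n).measurableSet

/-! ### Null sets and the ideal `ℰ` -/

theorem exists_pairwiseDisjoint_cylSet_of_isOpen {U : Set (ℕ → Bool)} (hU : IsOpen U) :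
    ∃ S : Set (List Bool), S.PairwiseDisjoint cylSet ∧ ⋃ s ∈ S, cylSet s = U := by
  classical
  have hex : ∀ x ∈ U, ∃ n, PiNat.cylinder x n ⊆ U := fun x hx => by
    obtain ⟨_, ⟨y, n, rfl⟩, hxy, hsub⟩ :=
      (PiNat.isTopologicalBasis_cylinders fun _ => Bool).exists_subset_of_mem_open hx hU
    exact ⟨n, PiNat.mem_cylinder_iff_eq.1 hxy ▸ hsub⟩
  choose! d hd using fun x hx => (⟨Nat.find (hex x hx), Nat.find_spec (hex x hx),
    fun m hm => Nat.find_min' (hex x hx) hm⟩ :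
      ∃ n, PiNat.cylinder x n ⊆ U ∧ ∀ m, PiNat.cylinder x m ⊆ U → n ≤ m)
  have hsame : ∀ x ∈ U, ∀ z ∈ PiNat.cylinder x (d x), seg x (d x) = seg z (d z) := by
    intro x hx z hz
    have hzU : z ∈ U := (hd x hx).1 hz
    have hle : d z ≤ d x := (hd z hzU).2 _ (PiNat.mem_cylinder_iff_eq.1 hz ▸ (hd x hx).1)
    have hxz : x ∈ PiNat.cylinder z (d z) :=
      PiNat.cylinder_anti _ hle ((PiNat.mem_cylinder_comm _ _ _).1 hz)
    have heq : d x = d z :=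
      le_antisymm ((hd x hx).2 _ (PiNat.mem_cylinder_iff_eq.1 hxz ▸ (hd z hzU).1)) hle
    rw [heq] at hz ⊢
    exact List.map_congr_left fun i hi => (hz i (List.mem_range.1 hi)).symm
  refine ⟨(fun x => seg x (d x)) '' U, ?_, ?_⟩
  · rintro _ ⟨x, hx, rfl⟩ _ ⟨y, hy, rfl⟩ hne
    refine disjoint_left.2 fun z hzx hzy => hne ?_
    rw [cylSet_seg] at hzx hzy
    exact (hsame x hx z hzx).trans (hsame y hy z hzy).symm
  · simp only [biUnion_image, cylSet_seg]
    exact Subset.antisymm (iUnion₂_subset fun x hx => (hd x hx).1)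
      fun x hx => mem_biUnion hx (PiNat.self_mem_cylinder x (d x))

/-- The definition of `IsNullCantor` only allows coverings indexed by `ℕ`, where every cylinder has
positive weight; other coverings are padded by cylinders of small total weight. -/
theorem exists_nat_cylSet_cover {ι : Type*} [Countable ι] {s : ι → List Bool}
    {ε : ℝ≥0∞} (hs : ∑' i, (2⁻¹ : ℝ≥0∞) ^ (s i).length < ε) :
    ∃ t : ℕ → List Bool,
      ⋃ i, cylSet (s i) ⊆ ⋃ n, cylSet (t n) ∧ ∑' n, (2⁻¹ : ℝ≥0∞) ^ (t n).length ≤ ε := by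
  obtain ⟨m, hm⟩ := ENNReal.exists_inv_two_pow_lt (tsub_pos_of_lt hs).ne'
  obtain ⟨e⟩ : Nonempty (ℕ ≃ ι ⊕ ℕ) := nonempty_equiv_of_countable
  let u : ι ⊕ ℕ → List Bool := Sum.elim s fun n => List.replicate (m + 1 + n) false
  refine ⟨u ∘ e, ?_, ?_⟩
  · exact iUnion_subset fun i =>
      subset_iUnion_of_subset (e.symm (.inl i)) (by simp [u])
  · have hpad : ∑' n, (2⁻¹ : ℝ≥0∞) ^ (m + 1 + n) = 2⁻¹ ^ m := by
      simp only [pow_add, ENNReal.tsum_mul_left, ENNReal.tsum_geometric, ENNReal.one_sub_inv_two]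
      rw [pow_one, inv_inv, mul_assoc, ENNReal.inv_mul_cancel two_ne_zero ENNReal.ofNat_ne_top,
        mul_one]
    calc ∑' n, (2⁻¹ : ℝ≥0∞) ^ ((u ∘ e) n).length
        = ∑' i, (2⁻¹ : ℝ≥0∞) ^ (u i).length :=
          e.tsum_eq fun i => (2⁻¹ : ℝ≥0∞) ^ (u i).length
      _ = ∑' i, (2⁻¹ : ℝ≥0∞) ^ (s i).length + 2⁻¹ ^ m := by
          rw [Summable.tsum_sum ENNReal.summable ENNReal.summable]
          simp [u, hpad]
      _ ≤ ∑' i, (2⁻¹ : ℝ≥0∞) ^ (s i).length + (ε - ∑' i, (2⁻¹ : ℝ≥0∞) ^ (s i).length) := by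
          gcongr
      _ = ε := add_tsub_cancel_of_le hs.le

theorem isNullCantor_iff {A : Set (ℕ → Bool)} : IsNullCantor A ↔ coinMeasure A = 0 := by
  refine ⟨fun hA => nonpos_iff_eq_zero.1 (le_of_forall_pos_le_add fun ε hε => ?_),
    fun hA ε hε => ?_⟩
  · obtain ⟨s, hAs, hs⟩ := hA ε hε
    calc coinMeasure A
        ≤ ∑' n, coinMeasure (cylSet (s n)) := (measure_mono hAs).trans (measure_iUnion_le _)
      _ ≤ 0 + ε := by simpa only [coinMeasure_cylSet, zero_add] using hs
  · obtain ⟨U, hAU, hU, hUε⟩ := A.exists_isOpen_lt_of_lt ε (hA ▸ hε)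
    obtain ⟨S, hdisj, rfl⟩ := exists_pairwiseDisjoint_cylSet_of_isOpen hU
    have hmeas (s : List Bool) : MeasurableSet (cylSet s) := by
      obtain ⟨x, hx⟩ := exists_cylSet_eq_cylinder s
      exact hx ▸ measurableSet_cylinder x s.length
    rw [measure_biUnion S.to_countable hdisj fun s _ => hmeas s] at hUε
    simp only [coinMeasure_cylSet] at hUε
    obtain ⟨t, ht, htε⟩ := exists_nat_cylSet_cover hUε
    exact ⟨t, hAU.trans (by rwa [biUnion_eq_iUnion]), htε⟩

theorem mem_EIdeal_iff {E : Set (ℕ → Bool)} :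
    E ∈ EIdeal ↔ ∃ C : ℕ → Set (ℕ → Bool),
      (∀ n, IsClosed (C n)) ∧ (∀ n, coinMeasure (C n) = 0) ∧ E ⊆ ⋃ n, C n := by
  simp only [EIdeal, mem_ofPred_eq, isNullCantor_iff, forall_and, and_assoc]
  rfl

theorem iUnion_mem_EIdeal {ι : Type*} [Countable ι] {C : ι → Set (ℕ → Bool)}
    (hclosed : ∀ i, IsClosed (C i)) (hnull : ∀ i, coinMeasure (C i) = 0) :
    ⋃ i, C i ∈ EIdeal := by
  obtain ⟨e, he⟩ := exists_surjective_nat (Option ι)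
  refine mem_EIdeal_iff.2 ⟨fun n => (e n).elim ∅ C, fun n => ?_, fun n => ?_, ?_⟩
  · cases h : e n <;> simp [h, hclosed]
  · cases h : e n <;> simp [h, hnull]
  · exact iUnion_subset fun i => by
      obtain ⟨n, hn⟩ := he (some i)
      exact subset_iUnion_of_subset n (by simp [hn])

theorem coinMeasure_eq_zero_of_mem_EIdeal {E : Set (ℕ → Bool)} (hE : E ∈ EIdeal) :
    coinMeasure E = 0 := by
  obtain ⟨C, -, hnull, hEC⟩ := mem_EIdeal_iff.1 hE
  exact measure_mono_null hEC (measure_iUnion_null hnull)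

theorem mem_EIdeal_of_countable {E : Set (ℕ → Bool)} (hE : E.Countable) : E ∈ EIdeal := by
  have := hE.to_subtype
  exact iUnion_of_singleton_coe E ▸
    iUnion_mem_EIdeal (fun _ => isClosed_singleton) fun _ => measure_singleton _

theorem union_mem_EIdeal {E E' : Set (ℕ → Bool)} (hE : E ∈ EIdeal) (hE' : E' ∈ EIdeal) :
    E ∪ E' ∈ EIdeal := by
  obtain ⟨C, hC, hCnull, hEC⟩ := mem_EIdeal_iff.1 hE
  obtain ⟨C', hC', hCnull', hEC'⟩ := mem_EIdeal_iff.1 hE'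
  refine mem_EIdeal_iff.2 ⟨fun n => C n ∪ C' n, fun n => (hC n).union (hC' n),
    fun n => measure_union_null (hCnull n) (hCnull' n), ?_⟩
  rw [iUnion_union_distrib]
  exact union_subset_union hEC hEC'

/-! ### Sets of asymptotic density zero -/

theorem isIdealOn_densityZero : IsIdealOn densityZero where
  subset_mem A B hAB hB := by
    refine squeeze_zero (fun n => by positivity) (fun n => ?_) hB
    gcongr
    exact (finite_Iio n).inter_of_right B
  union_mem A B hA hB := by
    refine squeeze_zero (fun n => by positivity) (fun n => ?_) (by simpa using hA.add hB)
    rw [← add_div, union_inter_distrib_right]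
    gcongr
    exact_mod_cast ncard_union_le _ _
  finite_mem A hA := by
    refine squeeze_zero (fun n => by positivity) (fun n => ?_)
      (tendsto_const_nhds (x := (A.ncard : ℝ)).div_atTop tendsto_natCast_atTop_atTop)
    gcongr
    exact inter_subset_left
  proper h := by
    have h' : Tendsto (fun n : ℕ => (n : ℝ) / n) atTop (𝓝 0) := by
      simpa [densityZero, Set.ncard_eq_toFinset_card'] using h
    have hone : Tendsto (fun n : ℕ => (n : ℝ) / n) atTop (𝓝 1) :=
      tendsto_const_nhds.congr' ((eventually_ne_atTop 0).mono fun n hn =>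
        (div_self (Nat.cast_ne_zero.2 hn)).symm)
    exact zero_ne_one (tendsto_nhds_unique h' hone)

theorem ncard_inter_Iio_le_sum_dyadic (B : Set ℕ) (n : ℕ) :
    (B ∩ Iio n).ncard ≤
      1 + ∑ i ∈ Finset.range (Nat.log 2 n + 1), (B ∩ Ico (2 ^ i) (2 ^ (i + 1))).ncard := by
  have hsub : B ∩ Iio n ⊆
      {0} ∪ ⋃ i ∈ Finset.range (Nat.log 2 n + 1), B ∩ Ico (2 ^ i) (2 ^ (i + 1)) := by
    rintro m ⟨hmB, hmn⟩
    rcases eq_or_ne m 0 with rfl | hm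
    · exact .inl rfl
    · refine .inr (mem_biUnion (x := Nat.log 2 m) ?_
        ⟨hmB, Nat.pow_log_le_self 2 hm, Nat.lt_pow_succ_log_self one_lt_two m⟩)
      exact Finset.mem_coe.2 (Finset.mem_range.2 (Nat.lt_succ_of_le (Nat.log_mono_right hmn.le)))
  have hfin : (⋃ i ∈ Finset.range (Nat.log 2 n + 1), B ∩ Ico (2 ^ i) (2 ^ (i + 1))).Finite :=
    (Finset.finite_toSet _).biUnion fun i _ => (finite_Ico _ _).inter_of_right B
  calc (B ∩ Iio n).ncard
      ≤ _ := ncard_le_ncard hsub ((finite_singleton 0).union hfin)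
    _ ≤ _ := ncard_union_le _ _
    _ ≤ _ := by
      rw [ncard_singleton]
      gcongr
      exact Finset.set_ncard_biUnion_le _ _

theorem tendsto_log_two_atTop : Tendsto (Nat.log 2) atTop atTop :=
  tendsto_atTop_atTop.2 fun b => ⟨2 ^ b, fun _ hn => Nat.le_log_of_pow_le one_lt_two hn⟩

theorem isBigO_geom_sum_log :
    (fun n => ∑ i ∈ Finset.range (Nat.log 2 n + 1), (2 : ℝ) ^ i) =O[atTop] fun n => (n : ℝ) := by
  refine .of_bound 2 ((eventually_ne_atTop 0).mono fun n hn => ?_)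
  have hpow : (2 : ℝ) ^ Nat.log 2 n ≤ n := mod_cast Nat.pow_log_le_self 2 hn
  rw [geom_sum_eq (by norm_num), Real.norm_natCast, Real.norm_of_nonneg]
  · linarith [pow_succ (2 : ℝ) (Nat.log 2 n)]
  · have := one_le_pow₀ (M₀ := ℝ) one_le_two (n := Nat.log 2 n + 1)
    linarith

theorem mem_densityZero_of_tendsto_dyadic {B : Set ℕ}
    (hB : Tendsto (fun n => ((B ∩ Ico (2 ^ n) (2 ^ (n + 1))).ncard : ℝ) / 2 ^ n) atTop (𝓝 0)) :
    B ∈ densityZero := by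
  have hpow : Tendsto (fun n => ∑ i ∈ Finset.range n, (2 : ℝ) ^ i) atTop atTop :=
    (not_summable_iff_tendsto_nat_atTop_of_nonneg fun i => by positivity).1
      (by simp [summable_geometric_iff_norm_lt_one])
  have hsum : (fun n => ∑ i ∈ Finset.range (Nat.log 2 n + 1),
      ((B ∩ Ico (2 ^ i) (2 ^ (i + 1))).ncard : ℝ)) =o[atTop] fun n => (n : ℝ) :=
    ((((Asymptotics.isLittleO_iff_tendsto (by simp)).2 hB).sum_range (fun i => by positivity)
      hpow).comp_tendsto ((tendsto_add_atTop_nat 1).comp tendsto_log_two_atTop)).trans_isBigO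
      isBigO_geom_sum_log
  have hone : (fun _ => (1 : ℝ)) =o[atTop] fun n : ℕ => (n : ℝ) :=
    (Asymptotics.isLittleO_const_id_atTop 1).comp_tendsto tendsto_natCast_atTop_atTop
  refine squeeze_zero (fun n => by positivity) (fun n => ?_) (hone.add hsum).tendsto_div_nhds_zero
  gcongr
  exact_mod_cast ncard_inter_Iio_le_sum_dyadic B n

theorem eq_of_testBit_eq_of_log_eq {N M : ℕ} (hN : N ≠ 0) (hM : M ≠ 0)
    (hlog : Nat.log 2 N = Nat.log 2 M) (h : ∀ i < Nat.log 2 N, N.testBit i = M.testBit i) :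
    N = M := by
  refine Nat.eq_of_testBit_eq fun i => ?_
  rcases lt_trichotomy i (Nat.log 2 N) with hi | rfl | hi
  · exact h i hi
  · have htop {K : ℕ} (hK : K ≠ 0) : K.testBit (Nat.log 2 K) = true :=
      Nat.log2_eq_log_two ▸ Nat.testBit_log2 hK
    rw [htop hN, hlog, htop hM]
  · have hbig {K : ℕ} (hK : Nat.log 2 K < i) : K.testBit i = false :=
      Nat.testBit_lt_two_pow (Nat.lt_pow_of_log_lt one_lt_two hK)
    rw [hbig hi, hbig (hlog ▸ hi)]

theorem ncard_testBit_preimage_le {W : Set (ℕ → Bool)} {n : ℕ} (hW : DeterminedBy W n) :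
    ((Nat.testBit ⁻¹' W ∩ Ico (2 ^ n) (2 ^ (n + 1))).ncard : ℝ) / 2 ^ n ≤
      coinMeasure.real W := by
  have hfin : (Nat.testBit ⁻¹' W ∩ Ico (2 ^ n) (2 ^ (n + 1))).Finite :=
    (finite_Ico _ _).inter_of_right _
  calc _ = ∑ N ∈ hfin.toFinset, coinMeasure.real (PiNat.cylinder N.testBit n) := by
        simp [measureReal_def, coinMeasure_cylinder, ncard_eq_toFinset_card _ hfin, div_eq_mul_inv]
    _ = coinMeasure.real (⋃ N ∈ hfin.toFinset, PiNat.cylinder N.testBit n) := by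
        refine (measureReal_biUnion_finset (fun N hN M hM hne => ?_)
          fun N _ => measurableSet_cylinder _ _).symm
        refine disjoint_left.2 fun z hzN hzM => hne ?_
        simp only [Finite.coe_toFinset] at hN hM
        have hlog {K : ℕ} (hK : K ∈ Ico (2 ^ n) (2 ^ (n + 1))) : Nat.log 2 K = n :=
          Nat.log_eq_of_pow_le_of_lt_pow hK.1 hK.2
        have hne_zero {K : ℕ} (hK : K ∈ Ico (2 ^ n) (2 ^ (n + 1))) : K ≠ 0 :=
          (Nat.two_pow_pos n).trans_le hK.1 |>.ne'
        refine eq_of_testBit_eq_of_log_eq (hne_zero hN.2) (hne_zero hM.2)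
          ((hlog hN.2).trans (hlog hM.2).symm) fun i hi => ?_
        rw [hlog hN.2] at hi
        exact (hzN i hi).symm.trans (hzM i hi)
    _ ≤ coinMeasure.real W := by
        refine measureReal_mono (iUnion₂_subset fun N hN z hz => ?_)
        exact (hW z _ hz).2 ((Finite.mem_toFinset hfin).1 hN).1

theorem setOf_testBit_mem_densityZero {W : ℕ → Set (ℕ → Bool)} (hdet : ∀ n, DeterminedBy (W n) n)
    (hW : Tendsto (fun n => coinMeasure (W n)) atTop (𝓝 0)) :
    {N | N.testBit ∈ W (Nat.log 2 N)} ∈ densityZero := by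
  have hreal : Tendsto (fun n => coinMeasure.real (W n)) atTop (𝓝 0) :=
    (ENNReal.tendsto_toReal ENNReal.zero_ne_top).comp hW
  refine mem_densityZero_of_tendsto_dyadic
    (squeeze_zero (fun n => by positivity) (fun n => ?_) hreal)
  refine le_trans ?_ (ncard_testBit_preimage_le (hdet n))
  gcongr ?_ / _
  refine mod_cast ncard_le_ncard ?_ ((finite_Ico _ _).inter_of_right _)
  rintro N ⟨hN, hNn⟩
  have hlog : Nat.log 2 N = n := Nat.log_eq_of_pow_le_of_lt_pow hNn.1 hNn.2
  rw [mem_ofPred_eq, hlog] at hN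
  exact ⟨hN, hNn⟩

/-! ### Prefix hulls and tail saturations -/

/-- The set of sequences that agree with some member of `F` below `n`. Determined by the first `n`
coordinates, these sets shrink to `F` as `n → ∞` when `F` is closed. -/
def prefixHull (F : Set (ℕ → Bool)) (n : ℕ) : Set (ℕ → Bool) :=
  ⋃ t ∈ F, PiNat.cylinder t n

theorem mem_prefixHull {F : Set (ℕ → Bool)} {n : ℕ} {z : ℕ → Bool} :
    z ∈ prefixHull F n ↔ ∃ t ∈ F, ∀ i < n, z i = t i := by
  simp [prefixHull, PiNat.mem_cylinder_iff]

theorem determinedBy_prefixHull (F : Set (ℕ → Bool)) {m n : ℕ} (hmn : m ≤ n) :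
    DeterminedBy (prefixHull F m) n := by
  intro x y hxy
  simp only [mem_prefixHull]
  refine exists_congr fun t => and_congr_right fun _ => forall₂_congr fun i hi => ?_
  rw [hxy i (hi.trans_le hmn)]

theorem tendsto_coinMeasure_prefixHull {F : Set (ℕ → Bool)} (hF : IsClosed F) :
    Tendsto (fun n => coinMeasure (prefixHull F n)) atTop (𝓝 (coinMeasure F)) := by
  have hinter : ⋂ n, prefixHull F n = F := by
    refine Subset.antisymm (fun z hz => ?_) fun z hz =>
      mem_iInter.2 fun n => mem_prefixHull.2 ⟨z, hz, fun _ _ => rfl⟩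
    by_contra hzF
    obtain ⟨n, hn⟩ := PiNat.exists_disjoint_cylinder hF hzF
    obtain ⟨t, ht, hzt⟩ := mem_prefixHull.1 (mem_iInter.1 hz n)
    exact disjoint_left.1 hn ht fun i hi => (hzt i hi).symm
  have hmeas (n : ℕ) : MeasurableSet (prefixHull F n) :=
    (isOpen_biUnion fun t _ => PiNat.isOpen_cylinder _ t n).measurableSet
  have hanti : Antitone (prefixHull F) := fun m n hmn =>
    iUnion₂_mono fun t _ => PiNat.cylinder_anti t hmn
  have htend := tendsto_measure_iInter_atTop (μ := coinMeasure)
    (fun n => (hmeas n).nullMeasurableSet) hanti ⟨0, measure_ne_top _ _⟩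
  rwa [hinter] at htend

/-- The set of sequences that agree with some member of `C` from `k` on. -/
def tailSaturation (k : ℕ) (C : Set (ℕ → Bool)) : Set (ℕ → Bool) :=
  {z | ∃ t ∈ C, ∀ i ≥ k, z i = t i}

theorem tailSaturation_eq_iUnion (k : ℕ) (C : Set (ℕ → Bool)) :
    tailSaturation k C = ⋃ s : Fin k → Bool, xorAdd (extendFalse s) ⁻¹' C := by
  ext z
  simp only [tailSaturation, mem_ofPred_eq, mem_iUnion, mem_preimage]
  constructor
  · rintro ⟨t, ht, hzt⟩
    refine ⟨fun i => xor (z i) (t i), ?_⟩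
    convert ht using 1
    ext i
    by_cases hi : i < k
    · simp [xorAdd, extendFalse, hi, Bool.xor_comm (z i)]
    · simp [xorAdd, extendFalse, hi, hzt i (not_lt.1 hi)]
  · rintro ⟨s, hs⟩
    refine ⟨_, hs, fun i hi => ?_⟩
    simp [xorAdd, extendFalse, not_lt.2 hi]

theorem isClosed_tailSaturation (k : ℕ) {C : Set (ℕ → Bool)} (hC : IsClosed C) :
    IsClosed (tailSaturation k C) := by
  rw [tailSaturation_eq_iUnion]
  refine isClosed_iUnion_of_finite fun s => hC.preimage (continuous_pi fun i => ?_)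
  exact (continuous_of_discreteTopology (f := xor (extendFalse s i))).comp (continuous_apply i)

theorem coinMeasure_tailSaturation_eq_zero (k : ℕ) {C : Set (ℕ → Bool)} (hC : coinMeasure C = 0) :
    coinMeasure (tailSaturation k C) = 0 := by
  rw [tailSaturation_eq_iUnion]
  exact measure_iUnion_null fun s =>
    (measurePreserving_xorAdd (extendFalse s)).quasiMeasurePreserving.preimage_null hC

theorem exists_tail_invariant_cover_of_mem_EIdeal {E : Set (ℕ → Bool)} (hE : E ∈ EIdeal) :
    ∃ F : ℕ → Set (ℕ → Bool), (∀ n, IsClosed (F n)) ∧ (∀ n, coinMeasure (F n) = 0) ∧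
      (∀ x ∈ E, ∀ᶠ n in atTop, x ∈ F n) ∧
      ∀ n, ∀ x ∈ F n, ∀ z : ℕ → Bool, (∀ i ≥ n, z i = x i) → z ∈ F n := by
  obtain ⟨C, hclosed, hnull, hEC⟩ := mem_EIdeal_iff.1 hE
  refine ⟨fun n => tailSaturation n (accumulate C n), fun n => ?_, fun n => ?_, fun x hx => ?_, ?_⟩
  · exact isClosed_tailSaturation n ((finite_Iic n).isClosed_biUnion fun i _ => hclosed i)
  · exact coinMeasure_tailSaturation_eq_zero n
      ((measure_biUnion_null_iff (to_countable (Iic n))).2 fun i _ => hnull i)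
  · obtain ⟨m, hm⟩ := mem_iUnion.1 (hEC hx)
    exact (eventually_ge_atTop m).mono fun n hn =>
      ⟨x, mem_accumulate.2 ⟨m, hn, hm⟩, fun _ _ => rfl⟩
  · rintro n x ⟨t, ht, hxt⟩ z hzx
    exact ⟨t, ht, fun i hi => (hzx i hi).trans (hxt i hi)⟩

/-! ### Diagonal sequences -/

theorem exists_tendsto_atTop_forall_diagonal {P : ℕ → ℕ → Prop} (h0 : ∀ n, P 0 n)
    (h : ∀ q, ∀ᶠ n in atTop, P q n) :
    ∃ k : ℕ → ℕ, Tendsto k atTop atTop ∧ (∀ n, k n ≤ n) ∧ (∀ n, P (k n) n) ∧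
      ∀ n, ∀ q ≤ n, P q n → q ≤ k n := by
  classical
  refine ⟨fun n => Nat.findGreatest (P · n) n, tendsto_atTop.2 fun q => ?_,
    fun n => Nat.findGreatest_le n, fun n => Nat.findGreatest_spec (P := (P · n)) n.zero_le (h0 n),
    fun n q hq hP => Nat.le_findGreatest hq hP⟩
  filter_upwards [h q, eventually_ge_atTop q] with n hn hqn
  exact Nat.le_findGreatest hqn hn

theorem exists_strictMono_interval_index (g : ℕ → ℕ) :
    ∃ v idx : ℕ → ℕ, StrictMono v ∧ Tendsto idx atTop atTop ∧ (∀ n, idx n ≤ n) ∧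
      ∀ i n, v i ≤ n → n ≤ g (v i) → idx n = i := by
  let v : ℕ → ℕ := fun i => (fun n => max n (g n) + 1)^[i] 0
  have hv_succ (i : ℕ) : v (i + 1) = max (v i) (g (v i)) + 1 := Function.iterate_succ_apply' _ _ _
  have hv : StrictMono v := strictMono_nat_of_lt_succ fun i => by grind
  obtain ⟨idx, htend, hle, hv_idx, hmax⟩ := exists_tendsto_atTop_forall_diagonal
    (P := fun i n => v i ≤ n) (fun n => n.zero_le) fun i => eventually_ge_atTop (v i)
  refine ⟨v, idx, hv, htend, hle, fun i n hin hng => le_antisymm ?_ ?_⟩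
  · refine Nat.lt_succ_iff.1 (hv.lt_iff_lt.1 ((hv_idx n).trans_lt ?_))
    grind
  · exact hmax n i ((hv.le_apply).trans hin) hin

theorem exists_frequently_eq_on_Ico {α : Type*} (z : ℕ → ℕ → α) (m : ℕ → ℕ) :
    ∃ y : ℕ → α, ∃ᶠ q in atTop, ∀ i ∈ Ico q (m q), z q i = y i := by
  obtain ⟨v, idx, hv, -, -, hidx⟩ := exists_strictMono_interval_index m
  refine ⟨fun i => z (v (idx i)) i,
    hv.tendsto_atTop.frequently (Frequently.of_forall fun j i hi => ?_)⟩
  simp only [hidx j i hi.1 hi.2.le]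

/-! ### Traces of infinite sets of integers -/

/-- The pair `(x, y)` codes the infinite set `A` of integers, each of which is identified with its
sequence of binary digits: some sequence of members of `A` converges to `x`, and infinitely many of
its terms, past the digits already known to agree with `x`, continue as `y` up to their leading
digit. -/
def Traces (A : Set ℕ) (x y : ℕ → Bool) : Prop :=
  ∃ a : ℕ → ℕ,
    (∀ q, a q ∈ A ∧ q ≤ Nat.log 2 (a q) ∧ (a q).testBit ∈ PiNat.cylinder x q) ∧
    ∃ᶠ q in atTop, ∀ i ∈ Ico q (Nat.log 2 (a q)), (a q).testBit i = y i

theorem exists_testBit_mem_cylinder {A : Set ℕ} (hA : A.Infinite) :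
    ∃ x : ℕ → Bool, ∀ q, ∃ N ∈ A, q ≤ Nat.log 2 N ∧ N.testBit ∈ PiNat.cylinder x q := by
  choose u huA hu using fun n => hA.exists_gt (2 ^ n)
  obtain ⟨x, hx⟩ := exists_clusterPt_of_compactSpace (map (fun n => (u n).testBit) atTop)
  refine ⟨x, fun q => ?_⟩
  have hnhds : PiNat.cylinder x q ∈ 𝓝 x :=
    (PiNat.isOpen_cylinder _ x q).mem_nhds (PiNat.self_mem_cylinder x q)
  obtain ⟨n, hn, hqn⟩ :=
    ((mapClusterPt_iff_frequently.1 hx _ hnhds).and_eventually (eventually_ge_atTop q)).exists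
  exact ⟨u n, huA n, hqn.trans (Nat.le_log_of_pow_le one_lt_two (hu n).le), hn⟩

theorem exists_traces {A : Set ℕ} (hA : A.Infinite) : ∃ x y, Traces A x y := by
  obtain ⟨x, hx⟩ := exists_testBit_mem_cylinder hA
  choose a haA hlog hax using hx
  obtain ⟨y, hy⟩ :=
    exists_frequently_eq_on_Ico (fun q => (a q).testBit) fun q => Nat.log 2 (a q)
  exact ⟨x, y, a, fun q => ⟨haA q, hlog q, hax q⟩, hy⟩

theorem infinite_of_frequently_mem {B : Set ℕ} {a : ℕ → ℕ} (ha : ∀ q, q ≤ Nat.log 2 (a q))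
    (h : ∃ᶠ q in atTop, a q ∈ B) : B.Infinite := by
  refine Nat.frequently_atTop_iff_infinite.1 (Tendsto.frequently ?_ h)
  exact tendsto_atTop_mono (fun q => (ha q).trans (Nat.log_le_self 2 _)) tendsto_id

theorem exists_tendsto_coinMeasure_prefixHull_diagonal {F : ℕ → Set (ℕ → Bool)}
    (hclosed : ∀ q, IsClosed (F q)) (hnull : ∀ q, coinMeasure (F q) = 0) :
    ∃ k : ℕ → ℕ, Tendsto k atTop atTop ∧ (∀ n, k n ≤ n) ∧
      Tendsto (fun n => coinMeasure (prefixHull (F (k n)) n)) atTop (𝓝 0) := by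
  have hsmall (q : ℕ) : ∀ᶠ n in atTop, coinMeasure (prefixHull (F q) n) ≤ 2⁻¹ ^ q := by
    have htend := tendsto_coinMeasure_prefixHull (hclosed q)
    rw [hnull q] at htend
    exact htend.eventually_le_const (ENNReal.pow_pos (by simp) q)
  obtain ⟨k, hk, hkle, hle, -⟩ := exists_tendsto_atTop_forall_diagonal
    (fun n => (pow_zero (2⁻¹ : ℝ≥0∞)).symm ▸ prob_le_one) hsmall
  have hpow : Tendsto (fun n => (2⁻¹ : ℝ≥0∞) ^ k n) atTop (𝓝 0) :=
    (ENNReal.tendsto_pow_atTop_nhds_zero_of_lt_one (by simp)).comp hk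
  exact ⟨k, hk, hkle, tendsto_of_tendsto_of_tendsto_of_le_of_le tendsto_const_nhds hpow
    (fun _ => zero_le) hle⟩

theorem exists_densityZero_forall_traces {E : Set (ℕ → Bool)} (hE : E ∈ EIdeal) :
    ∃ B ∈ densityZero, ∀ A x y, Traces A x y → x ∈ E → y ∈ E → (A ∩ B).Infinite := by
  obtain ⟨F, hclosed, hnull, hEF, hinv⟩ := exists_tail_invariant_cover_of_mem_EIdeal hE
  obtain ⟨k, hk, hkle, hW⟩ := exists_tendsto_coinMeasure_prefixHull_diagonal hclosed hnull
  let W : ℕ → Set (ℕ → Bool) := fun n => prefixHull (F (k n)) n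
  refine ⟨{N | N.testBit ∈ W (Nat.log 2 N)} ∪ {N | N.testBit ∈ W (k (Nat.log 2 N))},
    isIdealOn_densityZero.union_mem
      (setOf_testBit_mem_densityZero (fun n => determinedBy_prefixHull _ le_rfl) hW)
      (setOf_testBit_mem_densityZero (W := fun n => W (k n))
        (fun n => determinedBy_prefixHull _ (hkle n)) (hW.comp hk)), ?_⟩
  rintro A x y ⟨a, ha, hy⟩ hxE hyE
  refine infinite_of_frequently_mem (fun q => (ha q).2.1) ?_
  have hlog : Tendsto (fun q => Nat.log 2 (a q)) atTop atTop :=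
    tendsto_atTop_mono (fun q => (ha q).2.1) tendsto_id
  by_cases hq : ∃ᶠ q in atTop, k (Nat.log 2 (a q)) ≤ q
  · refine (hq.and_eventually (((hk.comp hk).comp hlog).eventually (hEF x hxE))).mono ?_
    rintro q ⟨hkq, hxF⟩
    exact ⟨(ha q).1, .inr (mem_prefixHull.2 ⟨x, hxF, fun i hi => (ha q).2.2 i (hi.trans_le hkq)⟩)⟩
  · refine ((hy.and_eventually (not_frequently.1 hq)).and_eventually
      ((hk.comp hlog).eventually (hEF y hyE))).mono ?_
    rintro q ⟨⟨hyq, hkq⟩, hyF⟩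
    let t : ℕ → Bool := fun i => if i < q then (a q).testBit i else y i
    have ht : t ∈ F (k (Nat.log 2 (a q))) :=
      hinv _ y hyF t fun i hi => if_neg (not_lt.2 ((not_le.1 hkq).le.trans hi))
    refine ⟨(ha q).1, .inl (mem_prefixHull.2 ⟨t, ht, fun i hi => ?_⟩)⟩
    rcases lt_or_ge i q with hiq | hiq
    · exact (if_pos hiq).symm
    · exact (hyq i ⟨hiq, hi⟩).trans (if_neg (not_lt.2 hiq)).symm

/-! ### Cardinal bounds from traces -/

theorem nonStarFam_nonempty {X : Type} {I : Set (Set X)} (hI : IsIdealOn I) :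
    (nonStarFam I).Nonempty := by
  refine ⟨_, {A | A.Infinite}, fun _ hA => hA, fun B hB => ⟨Bᶜ, fun hfin => hI.proper ?_, ?_⟩, rfl⟩
  · exact B.union_compl_self ▸ hI.union_mem hB (hI.finite_mem hfin)
  · simp

theorem sInf_covStarFam_le_mk {X ι : Type} {I : Set (Set X)} {B : ι → Set X} (hB : ∀ i, B i ∈ I)
    (h : ∀ A : Set X, A.Infinite → ∃ i, (A ∩ B i).Infinite) : sInf (covStarFam I) ≤ #ι := by
  have hmem : #(range B) ∈ covStarFam I :=
    ⟨range B, range_subset_iff.2 hB, fun A hA => by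
      obtain ⟨i, hi⟩ := h A hA
      exact ⟨B i, mem_range_self i, inter_comm A (B i) ▸ hi⟩, rfl⟩
  exact (csInf_le' hmem).trans mk_range_le

theorem nonIdeal_EIdeal_le_mk {𝒜 : Set (Set ℕ)} (hinf : ∀ A ∈ 𝒜, A.Infinite)
    (h𝒜 : ∀ B ∈ densityZero, ∃ A ∈ 𝒜, (A ∩ B).Finite) : nonIdeal EIdeal ≤ #𝒜 := by
  choose x y hxy using fun A : 𝒜 => exists_traces (hinf A A.2)
  have hS : range (Sum.elim x y) ∉ EIdeal := by
    intro hE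
    obtain ⟨B, hB, hBE⟩ := exists_densityZero_forall_traces hE
    obtain ⟨A, hA, hAB⟩ := h𝒜 B hB
    exact hBE A _ _ (hxy ⟨A, hA⟩) ⟨.inl _, rfl⟩ ⟨.inr _, rfl⟩ hAB
  have h𝒜_inf : Infinite 𝒜 :=
    not_finite_iff_infinite.1 fun _ => hS (mem_EIdeal_of_countable (finite_range _).countable)
  calc nonIdeal EIdeal
      ≤ #(range (Sum.elim x y)) := csInf_le' ⟨_, hS, rfl⟩
    _ ≤ #(𝒜 ⊕ 𝒜) := mk_range_le
    _ = #𝒜 := by rw [mk_sum, lift_id, add_eq_self (aleph0_le_mk 𝒜)]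

theorem nonIdeal_EIdeal_le_nonStar : nonIdeal EIdeal ≤ sInf (nonStarFam densityZero) := by
  refine le_csInf (nonStarFam_nonempty isIdealOn_densityZero) ?_
  rintro _ ⟨𝒜, hinf, h𝒜, rfl⟩
  exact nonIdeal_EIdeal_le_mk hinf h𝒜

theorem not_countable_of_sUnion_eq_univ {𝒞 : Set (Set (ℕ → Bool))} (h𝒞 : 𝒞 ⊆ EIdeal)
    (hcov : ⋃₀ 𝒞 = Set.univ) : ¬ 𝒞.Countable := fun hcount => by
  have hnull : coinMeasure (⋃₀ 𝒞) = 0 :=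
    (measure_sUnion_null_iff hcount).2 fun E hE => coinMeasure_eq_zero_of_mem_EIdeal (h𝒞 hE)
  simp [hcov] at hnull

theorem covStar_le_mk_of_sUnion_eq_univ {𝒞 : Set (Set (ℕ → Bool))} (h𝒞 : 𝒞 ⊆ EIdeal)
    (hcov : ⋃₀ 𝒞 = Set.univ) : sInf (covStarFam densityZero) ≤ #𝒞 := by
  choose B hB hBtraces using fun p : 𝒞 × 𝒞 =>
    exists_densityZero_forall_traces (union_mem_EIdeal (h𝒞 p.1.2) (h𝒞 p.2.2))
  have h𝒞_inf : Infinite 𝒞 := not_finite_iff_infinite.1 fun _ =>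
    not_countable_of_sUnion_eq_univ h𝒞 hcov 𝒞.toFinite.countable
  calc sInf (covStarFam densityZero)
      ≤ #(𝒞 × 𝒞) := sInf_covStarFam_le_mk hB fun A hA => by
        obtain ⟨x, y, hxy⟩ := exists_traces hA
        obtain ⟨E, hE, hxE⟩ := mem_sUnion.1 (hcov ▸ mem_univ x)
        obtain ⟨E', hE', hyE'⟩ := mem_sUnion.1 (hcov ▸ mem_univ y)
        exact ⟨(⟨E, hE⟩, ⟨E', hE'⟩), hBtraces _ A x y hxy (.inl hxE) (.inr hyE')⟩
    _ = #𝒞 := by rw [mk_prod, lift_id, mul_eq_self (aleph0_le_mk 𝒞)]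

theorem covStar_le_covIdeal_EIdeal : sInf (covStarFam densityZero) ≤ covIdeal EIdeal := by
  have hsingle : range (fun x : ℕ → Bool => {x}) ⊆ EIdeal :=
    range_subset_iff.2 fun x => mem_EIdeal_of_countable (countable_singleton x)
  refine le_csInf ⟨_, _, hsingle, by simp [sUnion_range, iUnion_of_singleton], rfl⟩ ?_
  rintro _ ⟨𝒞, h𝒞, hcov, rfl⟩
  exact covStar_le_mk_of_sUnion_eq_univ h𝒞 hcov

/-! ### Guessing initial segments -/

theorem frequently_testBit_mem_cylinder (x : ℕ → Bool) :
    ∃ᶠ i : ℕ in atTop, i.testBit ∈ PiNat.cylinder x (Nat.log 2 i) := by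
  refine frequently_atTop.2 fun l => ?_
  have hlt := Nat.ofBits_lt_two_pow fun j : Fin l => x j
  refine ⟨2 ^ l + Nat.ofBits fun j : Fin l => x j, ?_, fun j hj => ?_⟩
  · exact Nat.lt_two_pow_self.le.trans (Nat.le_add_right _ _)
  · rw [Nat.log_eq_of_pow_le_of_lt_pow (m := l) (by grind) (by grind)] at hj
    rw [Nat.testBit_two_pow_add_gt hj, Nat.testBit_ofBits_lt _ _ hj]

theorem determinedBy_cylinder (x : ℕ → Bool) {m n : ℕ} (hmn : m ≤ n) :
    DeterminedBy (PiNat.cylinder x m) n := fun y z hyz =>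
  forall₂_congr fun i hi => by rw [hyz i (hi.trans_le hmn)]

theorem setOf_testBit_mem_cylinder_mem_densityZero (c : ℕ → ℕ → Bool) {k : ℕ → ℕ}
    (hk : Tendsto k atTop atTop) (hkle : ∀ n, k n ≤ n) :
    {N : ℕ | N.testBit ∈ PiNat.cylinder (c (Nat.log 2 N)) (k (Nat.log 2 N))} ∈ densityZero := by
  refine setOf_testBit_mem_densityZero (W := fun n => PiNat.cylinder (c n) (k n))
    (fun n => determinedBy_cylinder _ (hkle n)) ?_
  simp only [coinMeasure_cylinder]
  exact (ENNReal.tendsto_pow_atTop_nhds_zero_of_lt_one (by simp)).comp hk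

theorem exists_densityZero_forall_leStar (g : ℕ → ℕ) :
    ∃ B ∈ densityZero, ∀ (A : Set ℕ) (x : ℕ → Bool) (a : ℕ → ℕ),
      (∀ q, a q ∈ A ∧ q ≤ Nat.log 2 (a q) ∧ (a q).testBit ∈ PiNat.cylinder x q) →
      LeStar (fun q => Nat.log 2 (a q)) g → (A ∩ B).Infinite := by
  obtain ⟨v, idx, hv, hidx, hidx_le, hidx_eq⟩ := exists_strictMono_interval_index g
  refine ⟨_, setOf_testBit_mem_cylinder_mem_densityZero (fun n => (idx n).testBit)
    (tendsto_log_two_atTop.comp hidx) fun n => (Nat.log_le_self _ _).trans (hidx_le n), ?_⟩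
  intro A x a ha hg
  refine infinite_of_frequently_mem (a := a ∘ v)
    (fun i => hv.le_apply.trans (ha (v i)).2.1) ?_
  refine ((frequently_testBit_mem_cylinder x).and_eventually
    (hv.tendsto_atTop.eventually hg)).mono ?_
  rintro i ⟨hix, hgi⟩
  refine ⟨(ha (v i)).1, fun j hj => ?_⟩
  simp only [Function.comp_apply, hidx_eq i _ (ha (v i)).2.1 hgi] at hj ⊢
  have hj' : j < v i := hj.trans_le ((Nat.log_le_self _ _).trans hv.le_apply)
  exact ((ha (v i)).2.2 j hj').trans (hix j hj).symm

theorem covStar_le_dNum : sInf (covStarFam densityZero) ≤ dNum := by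
  refine le_csInf ⟨_, Set.univ, fun f => ⟨f, mem_univ f, .of_forall fun _ => le_rfl⟩, rfl⟩ ?_
  rintro _ ⟨F, hF, rfl⟩
  choose B hB hBinf using exists_densityZero_forall_leStar
  refine sInf_covStarFam_le_mk (B := fun g : F => B g) (fun g => hB g) fun A hA => ?_
  obtain ⟨x, hx⟩ := exists_testBit_mem_cylinder hA
  choose a ha using hx
  obtain ⟨g, hg, hag⟩ := hF fun q => Nat.log 2 (a q)
  exact ⟨⟨g, hg⟩, hBinf g A x a ha hag⟩

/-! ### Random sets of density zero -/

/-- The set of integers `N` whose lowest `k (log N)` binary digits are read off `x`, each value of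
`log N` using its own coordinates of `x`. Under `coinMeasure` this is a random set, and membership
of integers with distinct logarithms is independent. -/
def digitMatchSet (k : ℕ → ℕ) (x : ℕ → Bool) : Set ℕ :=
  {N | N.testBit ∈ PiNat.cylinder (fun i => x (Nat.pair (Nat.log 2 N) i)) (k (Nat.log 2 N))}

/-- The coordinates of `x` that decide which integers of logarithm `n` belong to
`digitMatchSet k x`. -/
def digitCoords (k : ℕ → ℕ) (n : ℕ) : Finset ℕ :=
  (Finset.range (k n)).image (Nat.pair n)

theorem card_digitCoords (k : ℕ → ℕ) (n : ℕ) : (digitCoords k n).card = k n := by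
  rw [digitCoords, Finset.card_image_of_injective _ fun _ _ h => (Nat.pair_eq_pair.1 h).2,
    Finset.card_range]

theorem pairwise_disjoint_digitCoords (k : ℕ → ℕ) :
    Pairwise (Function.onFun Disjoint (digitCoords k)) := by
  refine fun n m hnm => Finset.disjoint_left.2 fun i hn hm => hnm ?_
  obtain ⟨_, -, rfl⟩ := Finset.mem_image.1 hn
  obtain ⟨_, -, heq⟩ := Finset.mem_image.1 hm
  exact (Nat.pair_eq_pair.1 heq).1.symm

theorem exists_setOf_mem_digitMatchSet_eq_pi (k : ℕ → ℕ) {a : ℕ → ℕ}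
    (ha : Function.Injective (Nat.log 2 ∘ a)) :
    ∃ c : ℕ → Bool, ∀ j, {x | a j ∈ digitMatchSet k x} =
      (digitCoords k (Nat.log 2 (a j)) : Set ℕ).pi fun i => {c i} := by
  refine ⟨fun m => (a (Function.invFun (Nat.log 2 ∘ a) m.unpair.1)).testBit m.unpair.2,
    fun j => ?_⟩
  have hinv : Function.invFun (Nat.log 2 ∘ a) (Nat.log 2 (a j)) = j :=
    Function.leftInverse_invFun ha j
  ext x
  simp only [digitMatchSet, digitCoords, mem_ofPred_eq, PiNat.mem_cylinder_iff, Set.mem_pi,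
    Finset.coe_image, forall_mem_image, Finset.coe_range, mem_Iio, mem_singleton_iff,
    Nat.unpair_pair, hinv, eq_comm]

theorem ae_frequently_mem_digitMatchSet {k a : ℕ → ℕ} (ha : Function.Injective (Nat.log 2 ∘ a))
    (hsum : ∑' j, (2⁻¹ : ℝ≥0∞) ^ k (Nat.log 2 (a j)) = ∞) :
    ∀ᵐ x ∂coinMeasure, ∃ᶠ j in atTop, a j ∈ digitMatchSet k x := by
  obtain ⟨c, hc⟩ := exists_setOf_mem_digitMatchSet_eq_pi k ha
  have hmeas (j : ℕ) : MeasurableSet {x | a j ∈ digitMatchSet k x} := by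
    rw [hc]
    exact .pi (Finset.countable_toSet _) fun i _ => measurableSet_singleton _
  have hindep :
      ProbabilityTheory.iIndepSet (fun j => {x | a j ∈ digitMatchSet k x}) coinMeasure := by
    simpa only [hc, Function.comp_def] using
      iIndepSet_pi_singleton ((pairwise_disjoint_digitCoords k).comp_of_injective ha) c
  have hsum' : ∑' j, coinMeasure {x | a j ∈ digitMatchSet k x} = ∞ := by
    simpa only [hc, coinMeasure_pi_singleton, card_digitCoords]
  have hone := ProbabilityTheory.measure_limsup_eq_one hmeas hindep hsum'
  filter_upwards [(mem_ae_iff_prob_eq_one (.measurableSet_limsup hmeas)).2 hone] with x hx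
  exact mem_limsup_iff_frequently_mem.1 hx

theorem isOpen_setOf_mem_digitMatchSet (k : ℕ → ℕ) (N : ℕ) :
    IsOpen {x | N ∈ digitMatchSet k x} := by
  have hpre : {x | N ∈ digitMatchSet k x} =
      (fun x i => x (Nat.pair (Nat.log 2 N) i)) ⁻¹'
        PiNat.cylinder N.testBit (k (Nat.log 2 N)) :=
    Set.ext fun _ => PiNat.mem_cylinder_comm _ _ _
  rw [hpre]
  exact (PiNat.isOpen_cylinder _ _ _).preimage
    (continuous_pi fun i => continuous_apply (Nat.pair (Nat.log 2 N) i))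

theorem setOf_finite_inter_digitMatchSet_mem_EIdeal {A : Set ℕ} {k : ℕ → ℕ}
    (hA : ∀ᵐ x ∂coinMeasure, (A ∩ digitMatchSet k x).Infinite) :
    {x | (A ∩ digitMatchSet k x).Finite} ∈ EIdeal := by
  let C : ℕ → Set (ℕ → Bool) := fun m => {x | ∀ N ∈ A, m < N → N ∉ digitMatchSet k x}
  have hC : {x | (A ∩ digitMatchSet k x).Finite} = ⋃ m, C m := by
    ext x
    rw [mem_ofPred_eq, finite_iff_bddAbove, mem_iUnion]
    exact exists_congr fun m =>
      ⟨fun h N hN hmN hND => hmN.not_ge (h ⟨hN, hND⟩),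
        fun h N hN => not_lt.1 fun hmN => h N hN.1 hmN hN.2⟩
  rw [hC]
  refine iUnion_mem_EIdeal (fun m => ?_) fun m => measure_mono_null (subset_iUnion C m) ?_
  · simp only [C, ofPred_forall]
    exact isClosed_biInter fun N _ => isClosed_iInter fun _ =>
      (isOpen_setOf_mem_digitMatchSet k N).isClosed_compl
  · rw [← hC]
    simpa only [ae_iff, not_infinite] using hA

theorem tsum_eq_top_of_frequently_one_le_sum {u : ℕ → ℝ≥0∞} {m : ℕ → ℕ}
    (h : ∃ᶠ q in atTop, 1 ≤ ∑ i ∈ Finset.range (m q), u (i + q)) : ∑' i, u i = ∞ := by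
  by_contra hu
  obtain ⟨q, hq, hlt⟩ :=
    (h.and_eventually ((ENNReal.tendsto_sum_nat_add u hu).eventually_lt_const one_pos)).exists
  exact (hq.trans (ENNReal.sum_le_tsum _)).not_gt hlt

theorem exists_strictMono_log {A : Set ℕ} (hA : A.Infinite) :
    ∃ a : ℕ → ℕ, (∀ q, a q ∈ A) ∧ StrictMono (Nat.log 2 ∘ a) := by
  choose u huA hu using fun n => hA.exists_gt n
  have htend : Tendsto (Nat.log 2 ∘ u) atTop atTop :=
    tendsto_log_two_atTop.comp (tendsto_atTop_mono (fun n => (hu n).le) tendsto_id)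
  obtain ⟨φ, -, hφ⟩ := strictMono_subseq_of_tendsto_atTop htend
  exact ⟨u ∘ φ, fun q => huA (φ q), hφ⟩

theorem tsum_log_eq_top_of_not_leStar {f k a : ℕ → ℕ} (ha : StrictMono (Nat.log 2 ∘ a))
    (hk : ∀ q n, n < f q → k n ≤ q)
    (hf : ¬ LeStar f fun q => Nat.log 2 (a (q + 2 ^ q))) :
    ∑' j, (2⁻¹ : ℝ≥0∞) ^ k (Nat.log 2 (a j)) = ∞ := by
  refine tsum_eq_top_of_frequently_one_le_sum (m := fun q => 2 ^ q)
    ((not_eventually.1 hf).mono fun q hq => ?_)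
  have hterm : ∀ i ∈ Finset.range (2 ^ q),
      (2⁻¹ : ℝ≥0∞) ^ q ≤ 2⁻¹ ^ k (Nat.log 2 (a (i + q))) := by
    intro i hi
    refine pow_le_pow_right_of_le_one' (by simp) (hk q _ ?_)
    exact (ha.monotone (by grind)).trans_lt (not_le.1 hq)
  calc (1 : ℝ≥0∞) = ∑ _i ∈ Finset.range (2 ^ q), (2⁻¹ : ℝ≥0∞) ^ q := by
        simp [← ENNReal.inv_pow, ENNReal.mul_inv_cancel]
    _ ≤ _ := Finset.sum_le_sum hterm

theorem exists_not_leStar_of_mk_lt_dNum {ι : Type} (G : ι → ℕ → ℕ) (hι : #ι < dNum) :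
    ∃ f, ∀ i, ¬ LeStar f (G i) := by
  by_contra! hdom
  have hmem : dNum ≤ #(range G) :=
    csInf_le' ⟨range G, fun f => exists_range_iff.2 (hdom f), rfl⟩
  exact (hmem.trans mk_range_le).not_gt hι

theorem covIdeal_EIdeal_le_mk_of_lt_dNum {𝒜 : Set (Set ℕ)} (hinf : ∀ A ∈ 𝒜, A.Infinite)
    (h𝒜 : ∀ B ∈ densityZero, ∃ A ∈ 𝒜, (A ∩ B).Finite) (hlt : #𝒜 < dNum) :
    covIdeal EIdeal ≤ #𝒜 := by
  choose a haA ha using fun A : 𝒜 => exists_strictMono_log (hinf A A.2)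
  obtain ⟨f, hf⟩ := exists_not_leStar_of_mk_lt_dNum
    (fun A q => Nat.log 2 (a A (q + 2 ^ q))) hlt
  obtain ⟨k, hk, hkle, hkf, -⟩ := exists_tendsto_atTop_forall_diagonal
    (P := fun q n => ∀ q' < q, f q' ≤ n) (by simp) fun q =>
      (finite_Iio q).eventually_all.2 fun q' _ => eventually_ge_atTop (f q')
  have hkq (q n : ℕ) (hn : n < f q) : k n ≤ q := not_lt.1 fun hq => hn.not_ge (hkf n q hq)
  let E : 𝒜 → Set (ℕ → Bool) := fun A => {x | ((A : Set ℕ) ∩ digitMatchSet k x).Finite}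
  have hE (A : 𝒜) : E A ∈ EIdeal := by
    refine setOf_finite_inter_digitMatchSet_mem_EIdeal ?_
    filter_upwards [ae_frequently_mem_digitMatchSet (ha A).injective
      (tsum_log_eq_top_of_not_leStar (ha A) hkq (hf A))] with x hx
    exact infinite_of_frequently_mem (fun q => (ha A).le_apply)
      (hx.mono fun q hq => ⟨haA A q, hq⟩)
  have hcov : ⋃₀ range E = Set.univ := by
    refine eq_univ_of_forall fun x => ?_
    obtain ⟨A, hA, hfin⟩ := h𝒜 (digitMatchSet k x)
      (setOf_testBit_mem_cylinder_mem_densityZero (fun n i => x (Nat.pair n i)) hk hkle)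
    exact ⟨_, ⟨⟨A, hA⟩, rfl⟩, hfin⟩
  have hle : covIdeal EIdeal ≤ #(range E) := csInf_le' ⟨_, range_subset_iff.2 hE, hcov, rfl⟩
  exact hle.trans mk_range_le

theorem min_dNum_covIdeal_EIdeal_le_nonStar :
    min dNum (covIdeal EIdeal) ≤ sInf (nonStarFam densityZero) := by
  refine le_csInf (nonStarFam_nonempty isIdealOn_densityZero) ?_
  rintro _ ⟨𝒜, hinf, h𝒜, rfl⟩
  rcases le_or_gt dNum #𝒜 with hle | hlt
  · exact (min_le_left _ _).trans hle
  · exact (min_le_right _ _).trans (covIdeal_EIdeal_le_mk_of_lt_dNum hinf h𝒜 hlt)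

/-- `non(ℰ) ≤ non*(𝒵)`, `cov*(𝒵) ≤ cov(ℰ)` and `cov*(𝒵) ≤ non*(𝒵)`. -/
theorem stmt19 :
    nonIdeal EIdeal ≤ sInf (nonStarFam densityZero) ∧
    sInf (covStarFam densityZero) ≤ covIdeal EIdeal ∧
    sInf (covStarFam densityZero) ≤ sInf (nonStarFam densityZero) := by
  refine ⟨nonIdeal_EIdeal_le_nonStar, covStar_le_covIdeal_EIdeal, ?_⟩
  calc sInf (covStarFam densityZero)
      ≤ min dNum (covIdeal EIdeal) := le_min covStar_le_dNum covStar_le_covIdeal_EIdeal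
    _ ≤ sInf (nonStarFam densityZero) := min_dNum_covIdeal_EIdeal_le_nonStar

end
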